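/- Let G : D ⥤ C be a functor between locally presentable categories admitting a left adjoint F. Then G is conservative if and only if the essential image of F generates D under colimits. -/

import Mathlib

open CategoryTheory CategoryTheory.Limits

universe w v u

namespace Paper

/-- A full subcategory (given by a set of objects) is closed under isomorphisms. -/
def IsoClosed {C : Type*} [Category C] (P : Set C) : Prop :=
  ∀ ⦃X Y : C⦄, X ∈ P → Nonempty (X ≅ Y) → Y ∈ P

/-- A set of objects is closed under all colimits of shapes `J : Type w` that exist in `C`:
whenever a diagram valued in `P` admits a colimit cocone, its point belongs to `P`. -/
def ColimitClosed {C : Type u} [Category.{v} C] (P : Set C) : Prop :=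
  ∀ (J : Type w) (_ : SmallCategory J) (F : J ⥤ C) (c : Cocone F),
    Nonempty (IsColimit c) → (∀ j : J, F.obj j ∈ P) → c.pt ∈ P

/-- A set of objects is closed under all limits of shapes `J : Type w` that exist in `C`. -/
def LimitClosed {C : Type u} [Category.{v} C] (P : Set C) : Prop :=
  ∀ (J : Type w) (_ : SmallCategory J) (F : J ⥤ C) (c : Cone F),
    Nonempty (IsLimit c) → (∀ j : J, F.obj j ∈ P) → c.pt ∈ P

/-- `S` generates `C` under colimits: the only set of objects containing `S` which is
closed under isomorphisms and under all colimits that exist in `C` is all of `C`. -/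
def GeneratesUnderColimits {C : Type u} [Category.{v} C] (S : Set C) : Prop :=
  ∀ P : Set C, S ⊆ P → IsoClosed P → ColimitClosed.{w} P → ∀ X : C, X ∈ P

/-- The smallest set of objects containing `S` which is closed under isomorphisms and
under all colimits (of shapes in `Type w`) that exist in `C`. -/
def colimitClosure {C : Type u} [Category.{v} C] (S : Set C) : Set C :=
  ⋂₀ {P : Set C | S ⊆ P ∧ IsoClosed P ∧ ColimitClosed.{w} P}

/-- A category `J` is `κ`-filtered if every diagram indexed by a small category with
fewer than `κ` arrows admits a cocone. -/
def IsCardinalFiltered (J : Type w) [SmallCategory J] (κ : Cardinal.{w}) : Prop :=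
  ∀ (K : Type w) (_ : SmallCategory K) (F : K ⥤ J),
    Cardinal.mk (Arrow K) < κ → Nonempty (Cocone F)

/-- A set of objects is closed under colimits of `κ`-filtered shapes that exist in `C`. -/
def FilteredColimitClosed {C : Type u} [Category.{v} C] (κ : Cardinal.{w}) (P : Set C) :
    Prop :=
  ∀ (J : Type w) (_ : SmallCategory J), IsCardinalFiltered J κ →
    ∀ (F : J ⥤ C) (c : Cocone F),
      Nonempty (IsColimit c) → (∀ j : J, F.obj j ∈ P) → c.pt ∈ P

/-- An object `X` of a large category `C` is `κ`-presentable if its Hom-functor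
`Hom(X, -) : C ⥤ Type u` preserves colimits of `κ`-filtered (small) shapes. -/
def IsPresentableObj {C : Type (u + 1)} [Category.{u} C] (κ : Cardinal.{u}) (X : C) : Prop :=
  ∀ (J : Type u) (_ : SmallCategory J), IsCardinalFiltered J κ →
    PreservesColimitsOfShape J (coyoneda.obj (Opposite.op X))

/-- A large category `C` is locally presentable if it has all small colimits and there is
a regular cardinal `κ` such that `C` has, up to isomorphism, only a small set of
`κ`-presentable objects and every object of `C` is a `κ`-filtered colimit of
`κ`-presentable objects. -/
def LocallyPresentable (C : Type (u + 1)) [Category.{u} C] : Prop :=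
  HasColimits C ∧
    ∃ κ : Cardinal.{u}, κ.IsRegular ∧
      (∃ S : Set C, Small.{u} S ∧
        ∀ X : C, IsPresentableObj κ X → ∃ Y ∈ S, Nonempty (X ≅ Y)) ∧
      ∀ X : C, ∃ (J : Type u) (_ : SmallCategory J) (F : J ⥤ C) (c : Cocone F),
        IsCardinalFiltered J κ ∧ (∀ j : J, IsPresentableObj κ (F.obj j)) ∧
        c.pt = X ∧ Nonempty (IsColimit c)

end Paper

/-!
A locally presentable `D` is reflective in a category of presheaves, hence complete. In such a `D` a
conservative right adjoint `G` turns every counit `F (G X) ⟶ X` into a strong epimorphism: if it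
factors through a mono `i`, then `G i` is mono and split epi, hence invertible. So if `S` is a small
strong generator of `D`, the objects `F (G s)` for `s ∈ S` form another one. For `κ` so large that
these are all `κ`-presentable, every object of `D` is a colimit of objects obtained from them by
`κ`-small colimits. Conversely, if `G f` is invertible, the objects `Z` for which `Hom(Z, f)` is
bijective contain the essential image of `F` and are closed under colimits.
-/

namespace Paper

section StrongGenerators

variable {C : Type u} [Category.{v} C] {P Q : ObjectProperty C}

lemma isStrongGenerator_of_exists_strongEpi (hP : P.IsStrongGenerator)
    (hPQ : ∀ X, P X → ∃ (Y : C) (_ : Q Y) (p : Y ⟶ X), StrongEpi p) :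
    Q.IsStrongGenerator := by
  refine ObjectProperty.isStrongGenerator_iff.2 ⟨fun X Y f g hfg ↦ ?_, fun X Y i _ hi ↦ ?_⟩
  · refine hP.isSeparating f g fun Z hZ h ↦ ?_
    obtain ⟨W, hW, p, _⟩ := hPQ Z hZ
    rw [← cancel_epi p]
    simpa only [Category.assoc] using hfg W hW (p ≫ h)
  · refine hP.isIso_of_mono i fun Z hZ h ↦ ?_
    obtain ⟨W, hW, p, _⟩ := hPQ Z hZ
    obtain ⟨l, hl⟩ := hi W hW (p ≫ h)
    have sq : CommSq l p i h := ⟨hl⟩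
    exact ⟨sq.lift, sq.fac_right⟩

lemma exists_le_isCardinalPresentable [ObjectProperty.Small.{w} P]
    (hP : ∀ X, P X → IsPresentable.{w} X) :
    ∃ (κ : Cardinal.{w}) (_ : Fact κ.IsRegular), P ≤ isCardinalPresentable C κ := by
  choose κ hκ hPκ using fun X : Subtype P ↦ (hP X.1 X.2).exists_cardinal
  obtain ⟨μ, hμ, hκμ⟩ :=
    HasCardinalLT.exists_regular_cardinal_forall.{w} fun X : Subtype P ↦ (κ X).ord.ToType
  have : Fact μ.IsRegular := ⟨hμ⟩
  refine ⟨μ, this, fun X hX ↦ ?_⟩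
  have : IsCardinalPresentable X (κ ⟨X, hX⟩) := hPκ ⟨X, hX⟩
  have hle : κ ⟨X, hX⟩ ≤ μ :=
    le_of_lt (by simpa [hasCardinalLT_iff_cardinal_mk_lt] using hκμ ⟨X, hX⟩)
  exact isCardinalPresentable_of_le X hle

end StrongGenerators

section Limits

lemma hasLimitsOfSize_of_isDense {A : Type w} [SmallCategory A] {C : Type u} [Category.{w} C]
    [HasColimitsOfSize.{w, w} C] (K : A ⥤ C) [K.IsDense] : HasLimitsOfSize.{w, w} C :=
  letI : Reflective (Presheaf.restrictedULiftYoneda.{w} K) :=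
    { L := uliftYoneda.{w}.leftKanExtension K
      adj := Presheaf.uliftYonedaAdjunction.{w} _ (uliftYoneda.{w}.leftKanExtensionUnit K) }
  hasLimits_of_reflective (Presheaf.restrictedULiftYoneda.{w} K)

lemma hasLimitsOfSize_of_isLocallyPresentable (C : Type u) [Category.{v} C]
    [IsLocallyPresentable.{w} C] : HasLimitsOfSize.{w, w} C := by
  obtain ⟨κ, _, _⟩ := IsLocallyPresentable.exists_cardinal.{w} C
  let e := ShrinkHoms.equivalence.{w} C
  have := e.isCardinalLocallyPresentable κ
  let P := isCardinalPresentable (ShrinkHoms.{u} C) κ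
  have := hasLimitsOfSize_of_isDense ((equivSmallModel.{w} P.FullSubcategory).inverse ⋙ P.ι)
  exact Adjunction.has_limits_of_equivalence e.functor

end Limits

section GeneratesUnderColimits

variable {C : Type u} [Category.{v} C]

lemma generatesUnderColimits_iff (S : ObjectProperty C) :
    GeneratesUnderColimits.{w} S ↔
      ∀ (Q : ObjectProperty C) [Q.IsClosedUnderIsomorphisms]
        [∀ (J : Type w) [SmallCategory J], Q.IsClosedUnderColimitsOfShape J], S ≤ Q → ⊤ ≤ Q := by
  refine ⟨fun h Q _ _ hSQ X _ ↦ ?_, fun h Q hSQ hiso hcolim X ↦ ?_⟩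
  · exact h Q hSQ (fun _ _ hX ⟨e⟩ ↦ Q.prop_of_iso e hX)
      (fun J _ _ _ ⟨hc⟩ hK ↦ Q.prop_of_isColimit hc hK) X
  · have : ObjectProperty.IsClosedUnderIsomorphisms Q := ⟨fun e hX ↦ hiso hX ⟨e⟩⟩
    have (J : Type w) [SmallCategory J] : ObjectProperty.IsClosedUnderColimitsOfShape Q J :=
      ⟨fun _ ⟨p⟩ ↦ hcolim J _ p.diag p.cocone ⟨p.isColimit⟩ p.prop_diag_obj⟩
    exact h Q hSQ X trivial

lemma GeneratesUnderColimits.mono {S T : Set C} (hS : GeneratesUnderColimits.{w} S)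
    (hST : S ⊆ T) : GeneratesUnderColimits.{w} T :=
  fun P hTP ↦ hS P (hST.trans hTP)

lemma generatesUnderColimits_of_isStrongGenerator [HasColimitsOfSize.{w, w} C]
    [LocallySmall.{w} C] {P : ObjectProperty C} [ObjectProperty.Small.{w} P]
    (hP : P.IsStrongGenerator) (hpres : ∀ X, P X → IsPresentable.{w} X) :
    GeneratesUnderColimits.{w} P := by
  obtain ⟨κ, _, hκ⟩ := exists_le_isCardinalPresentable hpres
  have := hP.isDense_colimitsCardinalClosure_ι hκ
  refine (generatesUnderColimits_iff P).2 fun Q _ _ hPQ X _ ↦ ?_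
  have hle : P.colimitsCardinalClosure κ ≤ Q :=
    P.colimitsCardinalClosure_le κ (fun _ _ _ ↦ inferInstance) hPQ
  let e := equivSmallModel.{w} (CostructuredArrow (P.colimitsCardinalClosure κ).ι X)
  exact Q.prop_of_isColimit
    (((P.colimitsCardinalClosure κ).ι.denseAt X).whiskerEquivalence e.symm)
    fun j ↦ hle _ (e.inverse.obj j).left.property

end GeneratesUnderColimits

section Adjunctions

universe v' u'

variable {C : Type u'} [Category.{v'} C] {D : Type u} [Category.{v} D] {F : C ⥤ D} {G : D ⥤ C}

lemma strongEpi_counit_app (adj : F ⊣ G) [HasEqualizers D] [HasPullbacks D]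
    [G.ReflectsIsomorphisms] (X : D) : StrongEpi (adj.counit.app X) := by
  rw [← extremalEpi_iff_strongEpi_of_hasPullbacks]
  refine ExtremalEpi.mk_of_hasEqualizers _ fun Z p i hpi _ ↦ ?_
  have := adj.rightAdjoint_preservesLimits.{0, 0}
  have : IsSplitEpi (G.map i) :=
    ⟨⟨{ section_ := adj.unit.app (G.obj X) ≫ G.map p
        id := by simp [← G.map_comp, hpi] }⟩⟩
  have : IsIso (G.map i) := isIso_of_mono_of_isSplitEpi (G.map i)
  exact isIso_of_reflects_iso i G

lemma generatesUnderColimits_essImage (adj : F ⊣ G) [IsLocallyPresentable.{w} D]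
    [G.ReflectsIsomorphisms] : GeneratesUnderColimits.{w} F.essImage := by
  obtain ⟨κ, _, _⟩ := IsLocallyPresentable.exists_cardinal.{w} D
  obtain ⟨S, _, hS⟩ := HasCardinalFilteredGenerator.exists_small_generator D κ
  have := hasLimitsOfSize_of_isLocallyPresentable.{w} D
  have := hasFiniteLimits_of_hasLimitsOfSize.{w, w} D
  have hFG : (S.strictMap (G ⋙ F)).IsStrongGenerator :=
    isStrongGenerator_of_exists_strongEpi hS.isStrongGenerator fun X hX ↦
      ⟨F.obj (G.obj X), ⟨X, hX⟩, adj.counit.app X, strongEpi_counit_app adj X⟩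
  refine (generatesUnderColimits_of_isStrongGenerator hFG fun _ _ ↦ inferInstance).mono ?_
  rintro _ ⟨X, _⟩
  exact F.obj_mem_essImage (G.obj X)

lemma isColocal_single_obj (adj : F ⊣ G) {X Y : D} (f : X ⟶ Y) [IsIso (G.map f)] (Z : C) :
    (MorphismProperty.single f).isColocal (F.obj Z) := by
  rw [MorphismProperty.isColocal_single_iff_bijective]
  have hcomp : (fun g : F.obj Z ⟶ X ↦ g ≫ f) =
      (adj.homEquiv Z Y).symm ∘ (asIso (G.map f)).homToEquiv ∘ adj.homEquiv Z X := by
    ext g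
    simp [← adj.homEquiv_naturality_right]
  rw [hcomp]
  exact (Equiv.bijective _).comp ((Equiv.bijective _).comp (Equiv.bijective _))

lemma reflectsIsomorphisms_of_generatesUnderColimits (adj : F ⊣ G)
    (h : GeneratesUnderColimits.{w} F.essImage) : G.ReflectsIsomorphisms where
  reflects {X Y} f _ := by
    have hF : F.essImage ≤ (MorphismProperty.single f).isColocal := by
      rintro Z ⟨W, ⟨e⟩⟩
      exact ObjectProperty.prop_of_iso _ e (isColocal_single_obj adj f W)
    have hf (Z : D) : (MorphismProperty.single f).isColocal Z :=
      (generatesUnderColimits_iff _).1 h _ hF Z trivial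
    rw [isIso_iff_yoneda_map_bijective]
    exact fun Z ↦ hf Z f ⟨⟨⟩⟩

theorem conserv_generates_general [IsLocallyPresentable.{w} D] (adj : F ⊣ G) :
    G.ReflectsIsomorphisms ↔ GeneratesUnderColimits.{w} F.essImage :=
  ⟨fun _ ↦ generatesUnderColimits_essImage adj,
    reflectsIsomorphisms_of_generatesUnderColimits adj⟩

end Adjunctions

section LocallyPresentable

lemma isCardinalFiltered_iff (J : Type w) [SmallCategory J] (κ : Cardinal.{w})
    [Fact κ.IsRegular] :
    IsCardinalFiltered J κ ↔ CategoryTheory.IsCardinalFiltered J κ := by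
  simp only [IsCardinalFiltered, ← hasCardinalLT_iff_cardinal_mk_lt]
  exact ⟨fun h ↦ ⟨fun F hA ↦ h _ _ F hA⟩, fun h _ _ F hA ↦ h.nonempty_cocone F hA⟩

variable {C : Type (u + 1)} [Category.{u} C]

lemma isPresentableObj_iff (κ : Cardinal.{u}) [Fact κ.IsRegular] (X : C) :
    IsPresentableObj κ X ↔ IsCardinalPresentable X κ := by
  simp only [IsPresentableObj, isCardinalFiltered_iff]
  exact ⟨fun h ↦ ⟨h⟩, fun h ↦ h.preservesColimitOfShape⟩

lemma LocallyPresentable.isLocallyPresentable (hC : LocallyPresentable C) :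
    IsLocallyPresentable.{u} C := by
  obtain ⟨_, κ, hκ, ⟨S, hS, hpres⟩, hcolim⟩ := hC
  have : Fact κ.IsRegular := ⟨hκ⟩
  simp only [isPresentableObj_iff, isCardinalFiltered_iff] at hpres hcolim
  have : ObjectProperty.EssentiallySmall.{u} (isCardinalPresentable C κ) := by
    refine ⟨S, hS, fun X hX ↦ ?_⟩
    obtain ⟨Y, hY, e⟩ := hpres X hX
    exact ⟨Y, hY, e⟩
  have hgen : (isCardinalPresentable C κ).IsCardinalFilteredGenerator κ :=
    { le_isCardinalPresentable := le_rfl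
      exists_colimitsOfShape X := by
        obtain ⟨J, _, K, c, hJ, hK, rfl, ⟨hc⟩⟩ := hcolim X
        exact ⟨J, inferInstance, hJ,
          ⟨{ diag := K, ι := c.ι, isColimit := hc, prop_diag_obj := hK }⟩⟩ }
  have := hgen.hasCardinalFilteredGenerator
  exact ⟨κ, inferInstance, {}⟩

end LocallyPresentable

/-!
STATEMENT 10 (`Conserv_Generates`): For a functor `G : D ⥤ C` between locally
presentable categories with left adjoint `F`, `G` is conservative if and only if
the essential image of `F` generates `D` under colimits.
-/

theorem conserv_generates {D C : Type (u + 1)} [Category.{u} D] [Category.{u} C]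
    (hD : LocallyPresentable D) (hC : LocallyPresentable C)
    {F : C ⥤ D} {G : D ⥤ C} (adj : F ⊣ G) :
    G.ReflectsIsomorphisms ↔ GeneratesUnderColimits.{u} F.essImage :=
  have := hD.isLocallyPresentable
  conserv_generates_general adj

end Paper
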